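/- For the 4n-parametric family of Lie brackets on ℝ^{4n}, the sectional curvatures k(x,y) = R(x,y,y,x)/(g(x,x)g(y,y) − g(x,y)²) of the basic 2-planes are, for each α (writing 1̄=4α−3, 2̄=4α−2, 3̄=4α−1, 4̄=4α): k(X_1̄,X_3̄) = −¼(λ_2̄²−λ_4̄²), k(X_2̄,X_4̄) = −¼(λ_1̄²−λ_3̄²), k(X_1̄,X_2̄) = −¼(λ_1̄²+λ_2̄²), k(X_1̄,X_4̄) = −¼(λ_1̄²−λ_4̄²), k(X_2̄,X_3̄) = −¼(λ_2̄²−λ_3̄²), k(X_3̄,X_4̄) = ¼(λ_3̄²+λ_4̄²). -/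

import Mathlib

noncomputable section

/-- The signature of the basis vectors inside each block: `(+, +, -, -)`. -/
def sgn : Fin 4 → ℝ := ![1, 1, -1, -1]

/-- Structure constants of the bracket inside one block, depending on the four
parameters `l 0 = λ_1̄`, `l 1 = λ_2̄`, `l 2 = λ_3̄`, `l 3 = λ_4̄`:
`sc l r s` is the coordinate vector of `[X_r, X_s]`. -/
def sc (l : Fin 4 → ℝ) : Fin 4 → Fin 4 → Fin 4 → ℝ :=
  ![![![0, 0, 0, 0], ![0, 0, l 1, -l 0], ![0, l 1, 0, l 3], ![0, -l 0, -l 3, 0]],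
    ![![0, 0, -l 1, l 0], ![0, 0, 0, 0], ![-l 1, 0, 0, -l 2], ![l 0, 0, l 2, 0]],
    ![![0, -l 1, 0, -l 3], ![l 1, 0, 0, l 2], ![0, 0, 0, 0], ![-l 3, l 2, 0, 0]],
    ![![0, l 0, l 3, 0], ![-l 0, 0, -l 2, 0], ![l 3, -l 2, 0, 0], ![0, 0, 0, 0]]]

/-- `V n = ℝ^{4n}`, with coordinates indexed by a block `α : Fin n` and an
offset `r : Fin 4` (offset `r` corresponds to the basis vector `X_{4α+r+1}`,
i.e. `r = 0,1,2,3` correspond to `1̄,2̄,3̄,4̄`). -/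
abbrev V (n : ℕ) : Type := Fin n × Fin 4 → ℝ

/-- The `4n`-parametric family of brackets on `ℝ^{4n}`: bilinear, vanishing on
pairs of basis vectors from different blocks, and given inside each block `α`
by the structure constants `sc` with parameters `λ_{4α+1},…,λ_{4α+4}`. -/
def brk {n : ℕ} (lam : Fin n × Fin 4 → ℝ) (x y : V n) : V n := fun p =>
  ∑ r : Fin 4, ∑ s : Fin 4,
    x (p.1, r) * y (p.1, s) * sc (fun t => lam (p.1, t)) r s p.2

/-- The standard basis vectors `X_i` of `ℝ^{4n}`. -/
def X {n : ℕ} (i : Fin n × Fin 4) : V n := fun j => if j = i then 1 else 0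

/-- The Norden metric `g`: the standard basis is orthogonal with
`g(X_1̄,X_1̄) = g(X_2̄,X_2̄) = 1`, `g(X_3̄,X_3̄) = g(X_4̄,X_4̄) = -1` in each block. -/
def gf {n : ℕ} (x y : V n) : ℝ := ∑ p : Fin n × Fin 4, sgn p.2 * x p * y p

/-- The almost complex structure `J`: `J X_1̄ = X_3̄`, `J X_2̄ = X_4̄`,
`J X_3̄ = -X_1̄`, `J X_4̄ = -X_2̄` in each block. -/
def Jm {n : ℕ} (x : V n) : V n := fun p =>
  ![-x (p.1, 2), -x (p.1, 3), x (p.1, 0), x (p.1, 1)] p.2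

/-- The curvature tensor `R(x,y,z,u) = −¼ g([x,y],[z,u])`. -/
def Rc {n : ℕ} (lam : Fin n × Fin 4 → ℝ) (x y z u : V n) : ℝ :=
  -(1 / 4) * gf (brk lam x y) (brk lam z u)

/-- The sectional curvature `k(x,y) = R(x,y,y,x)/(g(x,x)g(y,y) − g(x,y)²)` of
the 2-plane spanned by `x` and `y`. -/
def sect {n : ℕ} (lam : Fin n × Fin 4 → ℝ) (x y : V n) : ℝ :=
  Rc lam x y y x / (gf x x * gf y y - gf x y ^ 2)

/-!
The bracket is antisymmetric, so `R(x,y,y,x) = ¼ g([x,y],[x,y])`, and on a `g`-orthogonal pair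
the sectional curvature is `g([x,y],[x,y]) / (4 g(x,x) g(y,y))`. For two basis vectors `X_r`, `X_s`
of one block the denominator is `±4` and the bracket stays in the block, where `g` is the
quadratic form `v₀² + v₁² - v₂² - v₃²`; evaluating it on `[X_r, X_s]` gives the curvatures.
-/

theorem sc_swap (l : Fin 4 → ℝ) (r s q : Fin 4) : sc l s r q = -sc l r s q := by
  fin_cases r <;> fin_cases s <;> fin_cases q <;> simp [sc]

theorem sgn_eq_one_or_neg_one (r : Fin 4) : sgn r = 1 ∨ sgn r = -1 := by
  fin_cases r <;> simp [sgn]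

section Curvature

variable {n : ℕ} (lam : Fin n × Fin 4 → ℝ) (x y : V n)

theorem brk_swap : brk lam y x = -brk lam x y := by
  funext p
  simp only [brk, Pi.neg_apply, ← Finset.sum_neg_distrib]
  rw [Finset.sum_comm]
  refine Finset.sum_congr rfl fun r _ ↦ Finset.sum_congr rfl fun s _ ↦ ?_
  rw [sc_swap]
  ring

theorem gf_neg_right : gf x (-y) = -gf x y := by
  simp only [gf, Pi.neg_apply, mul_neg, Finset.sum_neg_distrib]

theorem Rc_eq_gf_brk_self : Rc lam x y y x = 1 / 4 * gf (brk lam x y) (brk lam x y) := by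
  rw [Rc, brk_swap lam x y, gf_neg_right]
  ring

variable {x y} in
theorem sect_of_gf_eq_zero (h : gf x y = 0) :
    sect lam x y = gf (brk lam x y) (brk lam x y) / (4 * (gf x x * gf y y)) := by
  rw [sect, Rc_eq_gf_brk_self, h]
  ring

end Curvature

section BasisVectors

variable {n : ℕ}

theorem gf_X_left (i : Fin n × Fin 4) (y : V n) : gf (X i) y = sgn i.2 * y i := by
  simp [gf, X]

theorem gf_X_self (i : Fin n × Fin 4) : gf (X i) (X i) = sgn i.2 := by
  simp [gf_X_left, X]

theorem gf_X_of_ne {i j : Fin n × Fin 4} (h : i ≠ j) : gf (X i) (X j) = 0 := by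
  simp [gf_X_left, X, h]

/-- The inclusion of `ℝ⁴` into `V n = ℝ^{4n}` as the block `α`; on this block `brk` and `gf`
reduce to finite sums over the four offsets. -/
def blockVec (α : Fin n) (v : Fin 4 → ℝ) : V n := fun p ↦ if p.1 = α then v p.2 else 0

theorem X_eq_blockVec (α : Fin n) (r : Fin 4) : X (α, r) = blockVec α (Pi.single r 1) := by
  funext p
  simp only [X, blockVec, Pi.single_apply, Prod.ext_iff, ite_and]

theorem gf_blockVec (α : Fin n) (v w : Fin 4 → ℝ) :
    gf (blockVec α v) (blockVec α w) = v 0 * w 0 + v 1 * w 1 - v 2 * w 2 - v 3 * w 3 := by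
  have sum_block : gf (blockVec α v) (blockVec α w) = ∑ q, sgn q * v q * w q := by
    simp [gf, blockVec, Fintype.sum_prod_type_right]
  rw [sum_block, Fin.sum_univ_four]
  simp only [sgn, Matrix.cons_val]
  ring

theorem brk_blockVec (lam : Fin n × Fin 4 → ℝ) (α : Fin n) (v w : Fin 4 → ℝ) :
    brk lam (blockVec α v) (blockVec α w) =
      blockVec α fun q ↦ ∑ r, ∑ s, v r * w s * sc (fun t ↦ lam (α, t)) r s q := by
  funext ⟨β, q⟩
  obtain rfl | h := eq_or_ne β α
  · simp only [brk, blockVec, if_true]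
  · simp [brk, blockVec, h]

theorem brk_X_X (lam : Fin n × Fin 4 → ℝ) (α : Fin n) (r s : Fin 4) :
    brk lam (X (α, r)) (X (α, s)) = blockVec α (sc (fun t ↦ lam (α, t)) r s) := by
  simp [X_eq_blockVec, brk_blockVec, Pi.single_apply]

theorem sect_X_X (lam : Fin n × Fin 4 → ℝ) (α : Fin n) {r s : Fin 4} (hrs : r ≠ s) :
    sect lam (X (α, r)) (X (α, s)) =
      sgn r * sgn s / 4 * gf (brk lam (X (α, r)) (X (α, s))) (brk lam (X (α, r)) (X (α, s))) := by
  have orthogonal : gf (X (α, r)) (X (α, s)) = 0 := gf_X_of_ne (by simpa using hrs)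
  rw [sect_of_gf_eq_zero lam orthogonal, gf_X_self, gf_X_self]
  rcases sgn_eq_one_or_neg_one r with hr | hr <;>
    rcases sgn_eq_one_or_neg_one s with hs | hs <;>
    rw [hr, hs] <;> ring

end BasisVectors

/-- the sectional curvatures of the basic 2-planes. -/
theorem sectional_curvatures {n : ℕ} (hn : 1 ≤ n) (lam : Fin n × Fin 4 → ℝ) :
    ∀ α : Fin n,
      sect lam (X (α, 0)) (X (α, 2)) = -(1 / 4) * (lam (α, 1) ^ 2 - lam (α, 3) ^ 2) ∧
      sect lam (X (α, 1)) (X (α, 3)) = -(1 / 4) * (lam (α, 0) ^ 2 - lam (α, 2) ^ 2) ∧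
      sect lam (X (α, 0)) (X (α, 1)) = -(1 / 4) * (lam (α, 0) ^ 2 + lam (α, 1) ^ 2) ∧
      sect lam (X (α, 0)) (X (α, 3)) = -(1 / 4) * (lam (α, 0) ^ 2 - lam (α, 3) ^ 2) ∧
      sect lam (X (α, 1)) (X (α, 2)) = -(1 / 4) * (lam (α, 1) ^ 2 - lam (α, 2) ^ 2) ∧
      sect lam (X (α, 2)) (X (α, 3)) = (1 / 4) * (lam (α, 2) ^ 2 + lam (α, 3) ^ 2) := by
  intro α
  refine ⟨?_, ?_, ?_, ?_, ?_, ?_⟩ <;>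
    rw [sect_X_X lam α (by decide), brk_X_X, gf_blockVec] <;>
    simp only [sgn, sc, Matrix.cons_val] <;>
    ring
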